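/- arXiv:1710.08766 — 2 statements merged into one kernel-verified Lean document; each statement's English description precedes it below -/
import Mathlib

section
/- There is a tall ideal I on ℕ which is an Fσ subset of the Cantor space 2^ℕ and which has no Borel selector. -/
open Set

/-- The Cantor space `2^ℕ`: subsets of `ℕ` identified with their characteristic functions. -/
abbrev Cantor : Type := ℕ → Bool

/-- The subset of `ℕ` coded by a point of Cantor space. -/
def toSet (x : Cantor) : Set ℕ := {n | x n = true}

/-- `s ⊑ z` : the finite set `s` is an initial segment of `z ⊆ ℕ`,
i.e. `s = z ∩ {0,1,…,n}` for some `n`. -/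
def InitSeg (s : Finset ℕ) (z : Set ℕ) : Prop := ∃ n : ℕ, (s : Set ℕ) = z ∩ Set.Iic n

/-- `s ⊑ t` for finite sets `s, t`. -/
def InitSegF (s t : Finset ℕ) : Prop := ∃ n : ℕ, s = t ∩ Finset.Iic n

/-- `B` is a front on the set `x ⊆ ℕ`: all members of `B` are subsets of `x`, any two
members of `B` are `⊑`-incomparable, and every infinite subset of `x` has an initial
segment in `B`. -/
def IsFrontOn (B : Set (Finset ℕ)) (x : Set ℕ) : Prop :=
  (∀ s ∈ B, (s : Set ℕ) ⊆ x) ∧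
  (∀ s ∈ B, ∀ t ∈ B, InitSegF s t → s = t) ∧
  (∀ y : Set ℕ, y ⊆ x → y.Infinite → ∃ s ∈ B, InitSeg s y)

/-- `y` is `F`-homogeneous: either every infinite subset of `y` has an initial segment
in `F`, or no finite subset of `y` belongs to `F`. -/
def Homog (F : Set (Finset ℕ)) (y : Set ℕ) : Prop :=
  (∀ z : Set ℕ, z ⊆ y → z.Infinite → ∃ s ∈ F, InitSeg s z) ∨
  (∀ s : Finset ℕ, (s : Set ℕ) ⊆ y → s ∉ F)

/-- `I` is an ideal on `ℕ`: a family of subsets of `ℕ` closed under taking subsets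
and under finite unions. -/
def IsIdeal (I : Set Cantor) : Prop :=
  (∀ x ∈ I, ∀ y : Cantor, toSet y ⊆ toSet x → y ∈ I) ∧
  (∀ x ∈ I, ∀ y ∈ I, (fun n => x n || y n) ∈ I)

/-- `I` is an `Fσ` subset of the Cantor space. -/
def IsFsigma (I : Set Cantor) : Prop :=
  ∃ C : ℕ → Set Cantor, (∀ n, IsClosed (C n)) ∧ I = ⋃ n, C n

/-- A family `C` is tall if every infinite subset of `ℕ` contains an infinite member of `C`. -/
def Tall (C : Set Cantor) : Prop :=
  ∀ x : Cantor, (toSet x).Infinite → ∃ y ∈ C, (toSet y).Infinite ∧ toSet y ⊆ toSet x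

/-- `S` is a Borel selector for the family `C`. -/
def IsSelector (C : Set Cantor) (S : Cantor → Cantor) : Prop :=
  Measurable S ∧ ∀ x : Cantor,
    toSet (S x) ⊆ toSet x ∧ ((toSet x).Infinite → (toSet (S x)).Infinite) ∧ S x ∈ C

/-- A Borel ideal `I` is uniformly selective. -/
def UnifSelective (I : Set Cantor) : Prop :=
  ∃ F : (ℕ → Cantor) → Cantor, Measurable F ∧
    ∀ xs : ℕ → Cantor, (∀ n, xs n ∉ I) → (∀ n, toSet (xs (n + 1)) ⊆ toSet (xs n)) →
      F xs ∉ I ∧ ∀ n ∈ toSet (F xs), toSet (F xs) \ Set.Iic n ⊆ toSet (xs n)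

/-- A Borel ideal `I` is uniformly `p⁺`. -/
def UnifPplus (I : Set Cantor) : Prop :=
  ∃ G : (ℕ → Cantor) → Cantor, Measurable G ∧
    ∀ xs : ℕ → Cantor, (∀ n, xs n ∉ I) → (∀ n, toSet (xs (n + 1)) ⊆ toSet (xs n)) →
      G xs ∉ I ∧ ∀ n, (toSet (G xs) \ toSet (xs n)).Finite

/-- `(t n)_{n∈ℕ}` is a partition of `x` into finite sets. -/
def FinPartition (x : Cantor) (t : ℕ → Cantor) : Prop :=
  (∀ n, (toSet (t n)).Finite) ∧
  (∀ m n, m ≠ n → Disjoint (toSet (t m)) (toSet (t n))) ∧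
  (⋃ n, toSet (t n)) = toSet x

/-- A Borel ideal `I` is uniformly `q⁺`. -/
def UnifQplus (I : Set Cantor) : Prop :=
  ∃ F : Cantor × (ℕ → Cantor) → Cantor, Measurable F ∧
    ∀ (x : Cantor) (t : ℕ → Cantor), x ∉ I → FinPartition x t →
      toSet (F (x, t)) ⊆ toSet x ∧ F (x, t) ∉ I ∧
      ∀ n, (toSet (F (x, t)) ∩ toSet (t n)).Subsingleton

/-- The ideal `I` is `q⁺`. -/
def Qplus (I : Set Cantor) : Prop :=
  ∀ (x : Cantor) (t : ℕ → Cantor), x ∉ I → FinPartition x t →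
    ∃ y : Cantor, toSet y ⊆ toSet x ∧ y ∉ I ∧
      ∀ n, (toSet y ∩ toSet (t n)).Subsingleton

/-- The ideal `I` is selective. -/
def Selective (I : Set Cantor) : Prop :=
  ∀ xs : ℕ → Cantor, (∀ n, xs n ∉ I) → (∀ n, toSet (xs (n + 1)) ⊆ toSet (xs n)) →
    ∃ x : Cantor, x ∉ I ∧ ∀ n ∈ toSet x, toSet x \ Set.Iic n ⊆ toSet (xs n)

/-- The ideal generated by `K`: `x ∈ IdealGen K` iff `x ⊆ y₁ ∪ … ∪ y_n` for some
`y₁, …, y_n ∈ K`. -/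
def IdealGen (K : Set Cantor) : Set Cantor :=
  {x | ∃ l : List Cantor, l ≠ [] ∧ (∀ y ∈ l, y ∈ K) ∧ toSet x ⊆ ⋃ y ∈ l, toSet y}

/-- `↓K = {x : x ⊆ y for some y ∈ K}`. -/
def Down (K : Set Cantor) : Set Cantor := {x | ∃ y ∈ K, toSet x ⊆ toSet y}

/-- `C` is hereditary: closed under taking subsets. -/
def Hereditary (C : Set Cantor) : Prop :=
  ∀ x ∈ C, ∀ y : Cantor, toSet y ⊆ toSet x → y ∈ C

/-- `A ⊆ 2^ℕ` is `Σ¹₂`: the projection of a coanalytic subset of `2^ℕ × ℕ^ℕ`. -/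
def Sigma12 (A : Set Cantor) : Prop :=
  ∃ C : Set (Cantor × (ℕ → ℕ)), MeasureTheory.AnalyticSet Cᶜ ∧
    A = {x | ∃ w : ℕ → ℕ, (x, w) ∈ C}

/-- `A ⊆ 2^ℕ` is `Π¹₂`: the complement of a `Σ¹₂` set. -/
def Pi12 (A : Set Cantor) : Prop := Sigma12 Aᶜ

/-!
Let each `a` in Cantor space code two trees on `ℕ`. In the game in which two players try to build
branches through them, move by move, one player has a winning strategy, so one of the trees is
simulated by the other. The pairs `(a, b)` where `b` codes such a strategy form two closed sets
`F i`, according to the index `i` of the simulated tree, whose sections at each `a` are not both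
empty. No Borel map `ι` picks for every `a` an index `ι a` with a nonempty section: `ι ⁻¹' {true}`
and `ι ⁻¹' {false}` are analytic, so by self-reference some `a` codes the trees that witness
`ι a = true` and `ι a = false`. The tree with index `ι a` has a branch while the other has none, so
the latter does not simulate the former.

The ideal lives on the nodes of the binary tree. It is generated by the antichains and by those
subsets of branches `a` that are sparse with respect to some `b` in a section of `F true` or
`F false` at `a`, together with their limits. It is tall because an infinite set of nodes contains
an infinite antichain or an infinite subset of a branch. A limit is infinite only on branches whose
section is nonempty; so what a Borel selector returns on the branch `a` reveals, in a Borel way,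
which section at `a` is nonempty.
-/

open Filter MeasureTheory PiNat Topology

section LocallyConstant

variable {X : Type*} [TopologicalSpace X]

theorem isLocallyConstant_eval {ι β : Type*} {f : X → ι → β} {g : X → ι}
    (hf : ∀ i, IsLocallyConstant fun x => f x i) (hg : IsLocallyConstant g) :
    IsLocallyConstant fun x => f x (g x) := by
  refine (IsLocallyConstant.iff_eventually_eq _).2 fun x => ?_
  filter_upwards [hg.eventually_eq x, (hf (g x)).eventually_eq x] with y hgy hfy
  rw [hgy, hfy]

theorem isLocallyConstant_apply {ι β : Type*} [TopologicalSpace β] [DiscreteTopology β] (i : ι) :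
    IsLocallyConstant fun x : ι → β => x i :=
  (IsLocallyConstant.iff_continuous _).2 (continuous_apply i)

end LocallyConstant

section Res

variable {α : Type*}

theorem res_suffix_res (x : ℕ → α) {m n : ℕ} (h : m ≤ n) : res x m <:+ res x n := by
  induction n, h using Nat.le_induction with
  | base => exact List.suffix_rfl
  | succ n _ ih => exact ih.trans (List.suffix_cons _ _)

theorem res_length_of_suffix {x : ℕ → α} {s : List α} {n : ℕ} (h : s <:+ res x n) :
    res x s.length = s := by
  have hs : s.length ≤ n := by simpa using h.length_le
  exact (List.suffix_of_suffix_length_le (res_suffix_res x hs) h (by simp)).eq_of_length (by simp)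

theorem isChain_range_res (x : ℕ → α) : IsChain (· <:+ ·) (range (res x)) := by
  rintro _ ⟨m, rfl⟩ _ ⟨n, rfl⟩ -
  exact (le_total m n).imp (res_suffix_res x) (res_suffix_res x)

theorem injective_res (x : ℕ → α) : Function.Injective (res x) := fun m n h => by
  simpa using congrArg List.length h

theorem finite_range_res_inter {x y : ℕ → α} (h : x ≠ y) :
    (range (res x) ∩ range (res y)).Finite := by
  obtain ⟨i, hi⟩ := Function.ne_iff.1 h
  refine ((finite_Iic i).image (res x)).subset ?_
  rintro _ ⟨⟨m, rfl⟩, n, hn⟩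
  obtain rfl : n = m := by simpa using congrArg List.length hn
  refine ⟨n, ?_, rfl⟩
  by_contra! hin
  exact hi (res_eq_res.1 hn (not_le.1 hin)).symm

theorem exists_res_length_eq [Nonempty α] (s : List α) : ∃ x : ℕ → α, res x s.length = s := by
  induction s with
  | nil => exact ⟨fun _ => Classical.arbitrary α, rfl⟩
  | cons a s ih =>
    obtain ⟨x, hx⟩ := ih
    refine ⟨Function.update x s.length a, ?_⟩
    have hagree : res (Function.update x s.length a) s.length = res x s.length :=
      res_eq_res.2 fun i hi => Function.update_of_ne hi.ne _ _
    rw [List.length_cons, res_succ, Function.update_self, hagree, hx]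

theorem isLocallyConstant_res [TopologicalSpace α] [DiscreteTopology α] (n : ℕ) :
    IsLocallyConstant fun x : ℕ → α => res x n := by
  induction n with
  | zero => exact IsLocallyConstant.const []
  | succ n ih => exact (isLocallyConstant_apply n).comp₂ ih List.cons

theorem exists_subset_range_res_of_isChain [Finite α] [Nonempty α] {Y : Set (List α)}
    (hY : IsChain (· <:+ ·) Y) : ∃ x : ℕ → α, Y ⊆ range (res x) := by
  let _ : TopologicalSpace α := ⊥
  have : DiscreteTopology α := ⟨rfl⟩
  rcases Y.eq_empty_or_nonempty with rfl | hne
  · exact ⟨fun _ => Classical.arbitrary α, empty_subset _⟩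
  have := hne.to_subtype
  let cyl : Y → Set (ℕ → α) := fun s => {x | res x (s : List α).length = s}
  have hclosed : ∀ s, IsClosed (cyl s) := fun s => (isLocallyConstant_res _).isClosed_fiber _
  have hmono : ∀ s t : Y, (s : List α) <:+ t → cyl t ⊆ cyl s := fun s t hst x hx =>
    res_length_of_suffix (n := (t : List α).length) (hst.trans (by rw [show res x _ = _ from hx]))
  have hdir : Directed (· ⊇ ·) cyl := fun s t => by
    rcases hY.total s.2 t.2 with h | h
    exacts [⟨t, hmono s t h, subset_rfl⟩, ⟨s, subset_rfl, hmono t s h⟩]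
  obtain ⟨x, hx⟩ := IsCompact.nonempty_iInter_of_directed_nonempty_isCompact_isClosed cyl hdir
    (fun s => exists_res_length_eq _) (fun s => (hclosed s).isCompact) hclosed
  exact ⟨x, fun s hs => ⟨s.length, mem_iInter.1 hx ⟨s, hs⟩⟩⟩

theorem tendsto_of_forall_res_eq [TopologicalSpace α] {u : ℕ → ℕ → α} {x : ℕ → α}
    (h : ∀ n, res (u n) n = res x n) : Tendsto u atTop (𝓝 x) := by
  refine tendsto_pi_nhds.2 fun i => tendsto_const_nhds.congr' ?_
  filter_upwards [eventually_gt_atTop i] with n hn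
  exact (res_eq_res.1 (h n) hn).symm

theorem exists_res_res_iff_mem_of_analyticSet [TopologicalSpace α] [DiscreteTopology α]
    {B : Set (ℕ → α)} (hB : AnalyticSet B) :
    ∃ T : List α → List ℕ → Prop, ∀ a, a ∈ B ↔ ∃ b : ℕ → ℕ, ∀ n, T (res a n) (res b n) := by
  rw [AnalyticSet] at hB
  rcases hB with rfl | ⟨f, hf, rfl⟩
  · exact ⟨fun _ _ => False, by simp⟩
  refine ⟨fun s t => ∃ n b, res (f b) n = s ∧ res b n = t, fun a => ⟨?_, ?_⟩⟩
  · rintro ⟨b, rfl⟩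
    exact ⟨b, fun n => ⟨n, b, rfl, rfl⟩⟩
  · rintro ⟨b, hb⟩
    choose m c hfc hc using hb
    obtain rfl : m = id := funext fun n => by simpa using congrArg List.length (hc n)
    have hcb : Tendsto c atTop (𝓝 b) := tendsto_of_forall_res_eq hc
    exact ⟨b, tendsto_nhds_unique ((hf.tendsto b).comp hcb) (tendsto_of_forall_res_eq hfc)⟩

end Res

section Simulation

variable {α β : Type*}

/-- The length-preserving map of finite sequences produced by a strategy `f`, which answers each
move `k` knowing the earlier moves `u` and its own earlier answers. As in `PiNat.res`, the latest
move stands at the head of the list. -/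
def respond (f : α → List α → List β → β) : List α → List β
  | [] => []
  | k :: u => f k u (respond f u) :: respond f u

/-- The strategy `f` witnesses that the tree of `p` is simulated by the tree of `q`, where the tree
of `p` consists of the sequences all of whose initial segments (suffixes, in this encoding)
satisfy `p`. -/
def Simulates (p : List α → Prop) (q : List β → Prop) (f : α → List α → List β → β) : Prop :=
  ∀ u, (∀ s, s <:+ u → p s) → q (respond f u)

/-- `Refutes p q u v` says that, from the position `(u, v)` of the game in which the two players
extend `u` and `v` in turn, the first player can force the second out of `q` in finitely many
rounds without having left `p` before. -/
inductive Refutes (p : List α → Prop) (q : List β → Prop) : List α → List β → Prop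
  | now {u v} : p u → ¬ q v → Refutes p q u v
  | step {u v} (k : α) : p u → (∀ l, Refutes p q (k :: u) (l :: v)) → Refutes p q u v

variable {p : List α → Prop} {q : List β → Prop}

theorem Refutes.left {u : List α} {v : List β} (h : Refutes p q u v) : p u := by
  cases h <;> assumption

theorem Refutes.exists_move [Nonempty α] {u : List α} {v : List β} (h : Refutes p q u v)
    (hv : q v) : ∃ k, ∀ l, Refutes p q (k :: u) (l :: v) := by
  cases h with
  | now _ hnv => exact absurd hv hnv
  | step k _ hk => exact ⟨k, hk⟩

theorem exists_simulates_of_refutes [Nonempty α] (h : Refutes p q [] []) :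
    ∃ g, Simulates q p g := by
  choose! move hmove using fun u v => Refutes.exists_move (p := p) (q := q) (u := u) (v := v)
  refine ⟨fun _ v u => move u v, fun v hv => Refutes.left (q := q) (v := v) ?_⟩
  induction v with
  | nil => exact h
  | cons l v ih =>
    have hsuffix : v <:+ l :: v := List.suffix_cons l v
    exact hmove _ _ (ih fun s hs => hv s (hs.trans hsuffix)) (hv v hsuffix) l

theorem exists_simulates_of_not_refutes [Nonempty β] (h : ¬ Refutes p q [] []) :
    ∃ f, Simulates p q f := by
  have hanswer : ∀ k u v, ¬ Refutes p q u v → p u → ∃ l, ¬ Refutes p q (k :: u) (l :: v) := by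
    intro k u v huv hu
    by_contra! hk
    exact huv (.step k hu hk)
  choose! answer hanswer using hanswer
  suffices hinv : ∀ u, (∀ s, s <:+ u → p s) → ¬ Refutes p q u (respond answer u) from
    ⟨answer, fun u hu => by_contra fun hq => hinv u hu (.now (hu u List.suffix_rfl) hq)⟩
  intro u hu
  induction u with
  | nil => exact h
  | cons k u ih =>
    have hsuffix : u <:+ k :: u := List.suffix_cons k u
    exact hanswer k u _ (ih fun s hs => hu s (hs.trans hsuffix)) (hu u hsuffix)

theorem exists_simulates_or_exists_simulates [Nonempty α] [Nonempty β] (p : List α → Prop)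
    (q : List β → Prop) : (∃ f, Simulates p q f) ∨ ∃ g, Simulates q p g := by
  by_cases h : Refutes p q [] []
  exacts [.inr (exists_simulates_of_refutes h), .inl (exists_simulates_of_not_refutes h)]

theorem exists_res_eq_respond (f : α → List α → List β → β) (x : ℕ → α) :
    ∃ y : ℕ → β, ∀ n, res y n = respond f (res x n) := by
  refine ⟨fun n => f (x n) (res x n) (respond f (res x n)), fun n => ?_⟩
  induction n with
  | zero => rfl
  | succ n ih => rw [res_succ, res_succ, respond, ih]

theorem Simulates.exists_branch {f : α → List α → List β → β} (hf : Simulates p q f)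
    (h : ∃ x : ℕ → α, ∀ n, p (res x n)) : ∃ y : ℕ → β, ∀ n, q (res y n) := by
  obtain ⟨x, hx⟩ := h
  obtain ⟨y, hy⟩ := exists_res_eq_respond f x
  refine ⟨y, fun n => hy n ▸ hf _ fun s hs => ?_⟩
  rw [← res_length_of_suffix hs]
  exact hx _

theorem isLocallyConstant_respond {X : Type*} [TopologicalSpace X]
    {f : X → α → List α → List β → β} (hf : ∀ k u v, IsLocallyConstant fun x => f x k u v)
    (u : List α) : IsLocallyConstant fun x => respond (f x) u := by
  induction u with
  | nil => exact IsLocallyConstant.const []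
  | cons k u ih => exact (isLocallyConstant_eval (hf k u) ih).comp₂ ih List.cons

theorem isClosed_simulates {X : Type*} [TopologicalSpace X] {p : X → List α → Prop}
    {q : X → List β → Prop} {f : X → α → List α → List β → β}
    (hp : ∀ u, IsLocallyConstant fun x => p x u) (hq : ∀ v, IsLocallyConstant fun x => q x v)
    (hf : ∀ k u v, IsLocallyConstant fun x => f x k u v) :
    IsClosed {x | Simulates (p x) (q x) (f x)} := by
  simp only [Simulates, ofPred_forall]
  refine isClosed_iInter fun u => isClosed_imp ?_ ?_
  · have hfin : {s | s <:+ u}.Finite := by simpa only [← List.mem_tails] using u.tails.finite_toSet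
    simp only [ofPred_forall]
    exact hfin.isOpen_biInter fun s _ => by simpa using (hp s).isOpen_fiber True
  · simpa using (isLocallyConstant_eval hq (isLocallyConstant_respond hf u)).isClosed_fiber True

end Simulation

section NoBorelChoice

/-- The tree on `ℕ` with index `i` coded by `a`. Membership of `u` is read off from `a` at a place
that depends on `a`, through its first `u.length` values; this is what makes the diagonal argument
in `exists_codedTree_iff` possible. -/
def codedTree (i : Bool) (a : Cantor) (u : List ℕ) : Prop :=
  a (Encodable.encode (i, res a u.length, u)) = true

theorem exists_codedTree_iff (T : Bool → List Bool → List ℕ → Prop) :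
    ∃ a : Cantor, ∀ i u, codedTree i a u ↔ T i (res a u.length) u := by
  classical
  let codes : Set ℕ := Encodable.encode '' {t : Bool × List Bool × List ℕ | T t.1 t.2.1 t.2.2}
  refine ⟨codes.boolIndicator, fun i u => ?_⟩
  rw [codedTree, ← mem_iff_boolIndicator, Encodable.encode_injective.mem_set_image,
    mem_ofPred_eq]

theorem isLocallyConstant_codedTree (i : Bool) (u : List ℕ) :
    IsLocallyConstant fun a => codedTree i a u :=
  (isLocallyConstant_eval (f := id) isLocallyConstant_apply
    ((isLocallyConstant_res u.length).comp fun s => Encodable.encode (i, s, u))).comp (· = true)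

/-- The pairs `(a, b)` such that `b` codes a strategy by which the tree with index `!i` coded by `a`
simulates the one with index `i`. -/
def simulations (i : Bool) : Set (Cantor × (ℕ → ℕ)) :=
  {z | Simulates (codedTree i z.1) (codedTree (!i) z.1)
    fun k u v => z.2 (Encodable.encode (k, u, v))}

theorem isClosed_simulations (i : Bool) : IsClosed (simulations i) :=
  isClosed_simulates (fun u => (isLocallyConstant_codedTree i u).comp_continuous continuous_fst)
    (fun v => (isLocallyConstant_codedTree (!i) v).comp_continuous continuous_fst)
    fun _ _ _ => (isLocallyConstant_apply _).comp_continuous continuous_snd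

theorem exists_mem_simulations (a : Cantor) : ∃ i b, (a, b) ∈ simulations i := by
  have hcode (i : Bool) (h : ∃ f, Simulates (codedTree i a) (codedTree (!i) a) f) :
      ∃ b, (a, b) ∈ simulations i := by
    obtain ⟨f, hf⟩ := h
    refine ⟨fun k => let t := Denumerable.ofNat (ℕ × List ℕ × List ℕ) k
      f t.1 t.2.1 t.2.2, ?_⟩
    simpa only [simulations, mem_ofPred_eq, Denumerable.ofNat_encode] using hf
  rcases exists_simulates_or_exists_simulates (codedTree true a) (codedTree false a) with h | h
  exacts [⟨true, hcode true h⟩, ⟨false, hcode false h⟩]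

theorem not_exists_measurableSet_mem_simulations :
    ¬ ∃ A : Set Cantor, MeasurableSet A ∧ (∀ a ∈ A, ∃ b, (a, b) ∈ simulations true) ∧
      ∀ a ∉ A, ∃ b, (a, b) ∈ simulations false := by
  rintro ⟨A, hA, htrue, hfalse⟩
  have : PolishSpace Bool := inferInstance
  have hmeas : Measurable A.boolIndicator :=
    measurable_to_bool (by rwa [preimage_boolIndicator_true])
  have hanalytic (i : Bool) : AnalyticSet (A.boolIndicator ⁻¹' {i}) :=
    (hmeas (measurableSet_singleton i)).analyticSet
  choose T hT using fun i => exists_res_res_iff_mem_of_analyticSet (hanalytic i)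
  obtain ⟨a, ha⟩ := exists_codedTree_iff T
  have hbranch (i : Bool) :
      A.boolIndicator a = i ↔ ∃ b : ℕ → ℕ, ∀ n, codedTree i a (res b n) := by
    simpa only [ha, res_length, mem_preimage, mem_singleton_iff] using hT i a
  obtain ⟨b, hb⟩ : ∃ b, (a, b) ∈ simulations (A.boolIndicator a) := by
    by_cases haA : a ∈ A
    · rw [(mem_iff_boolIndicator A a).1 haA]
      exact htrue a haA
    · rw [(notMem_iff_boolIndicator A a).1 haA]
      exact hfalse a haA
  have hneg : A.boolIndicator a = !A.boolIndicator a :=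
    (hbranch _).2 (hb.exists_branch ((hbranch _).1 rfl))
  exact Bool.not_ne_self _ hneg.symm

end NoBorelChoice

section Ideal

variable {J K : Set Cantor}

theorem toSet_boolIndicator (s : Set ℕ) : toSet s.boolIndicator = s :=
  ext fun n => (mem_iff_boolIndicator s n).symm

theorem toSet_sup (x y : Cantor) : toSet (x ⊔ y) = toSet x ∪ toSet y := by
  ext n
  simp [toSet]

theorem toSet_inf (x y : Cantor) : toSet (x ⊓ y) = toSet x ∩ toSet y := by
  ext n
  simp [toSet]

theorem IsIdeal.sup_mem (hJ : IsIdeal J) {x y : Cantor} (hx : x ∈ J) (hy : y ∈ J) : x ⊔ y ∈ J :=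
  hJ.2 x hx y hy

theorem IsIdeal.mem_of_subset_union (hJ : IsIdeal J) {x y z : Cantor} (hy : y ∈ J) (hz : z ∈ J)
    (h : toSet x ⊆ toSet y ∪ toSet z) : x ∈ J :=
  hJ.1 _ (hJ.sup_mem hy hz) x (by rwa [toSet_sup])

theorem IsIdeal.mem_of_finite (hJ : IsIdeal J) (h : ∀ x, (toSet x).Subsingleton → x ∈ J)
    {x : Cantor} (hx : (toSet x).Finite) : x ∈ J := by
  suffices hfin : ∀ s : Set ℕ, s.Finite → ∀ x, toSet x = s → x ∈ J from hfin _ hx x rfl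
  intro s hs
  induction s, hs using Set.Finite.induction_on with
  | empty => exact fun x hx => h x (hx ▸ subsingleton_empty)
  | @insert n s _ _ ih =>
    refine fun x hx => hJ.mem_of_subset_union (y := boolIndicator {n}) (z := boolIndicator s)
      (h _ ?_) (ih _ (toSet_boolIndicator s)) ?_
    · rw [toSet_boolIndicator]
      exact subsingleton_singleton
    · rw [hx, toSet_boolIndicator, toSet_boolIndicator, insert_eq]

theorem IsIdeal.setOf_inf_mem (hJ : IsIdeal J) (b : Cantor) : IsIdeal {x | x ⊓ b ∈ J} := by
  refine ⟨fun x hx y hyx => hJ.1 _ hx _ ?_, fun x hx y hy => hJ.mem_of_subset_union hx hy ?_⟩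
  · rw [toSet_inf, toSet_inf]
    exact inter_subset_inter_left _ hyx
  · change toSet ((x ⊔ y) ⊓ b) ⊆ _
    rw [toSet_inf, toSet_inf, toSet_inf, toSet_sup, union_inter_distrib_right]

theorem isIdeal_setOf_finite : IsIdeal {x | (toSet x).Finite} := by
  refine ⟨fun x hx y hyx => hx.subset hyx, fun x hx y hy => ?_⟩
  change (toSet (x ⊔ y)).Finite
  rw [toSet_sup]
  exact hx.union hy

theorem subset_idealGen (K : Set Cantor) : K ⊆ IdealGen K := fun x hx =>
  ⟨[x], by simp, by simpa using hx, by simp⟩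

theorem isIdeal_idealGen (K : Set Cantor) : IsIdeal (IdealGen K) := by
  refine ⟨fun x ⟨l, hl, hlK, hx⟩ y hyx => ⟨l, hl, hlK, hyx.trans hx⟩, ?_⟩
  rintro x ⟨l, hl, hlK, hx⟩ y ⟨m, -, hmK, hy⟩
  refine ⟨l ++ m, by simp [hl], fun z hz => (List.mem_append.1 hz).elim (hlK z) (hmK z), ?_⟩
  change toSet (x ⊔ y) ⊆ _
  simp only [toSet_sup, List.mem_append, iUnion_or, iUnion_union_distrib]
  exact union_subset_union hx hy

theorem idealGen_subset (hJ : IsIdeal J) (hK : K ⊆ J) : IdealGen K ⊆ J := by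
  rintro x ⟨l, hl, hlK, hx⟩
  induction l generalizing x with
  | nil => exact absurd rfl hl
  | cons y l ih =>
    have hy : y ∈ J := hK (hlK y List.mem_cons_self)
    simp only [List.mem_cons, iUnion_iUnion_eq_or_left] at hx
    rcases eq_or_ne l [] with rfl | hl
    · exact hJ.1 y hy x (by simpa using hx)
    have hdiff : (toSet x \ toSet y).boolIndicator ∈ J := by
      refine ih hl (fun z hz => hlK z (List.mem_cons_of_mem y hz)) ?_
      rwa [toSet_boolIndicator, sdiff_subset_iff]
    refine hJ.mem_of_subset_union hy hdiff ?_
    rw [toSet_boolIndicator, union_sdiff_self]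
    exact subset_union_right

theorem mem_idealGen_iff {x : Cantor} : x ∈ IdealGen K ↔
    ∃ (n : ℕ) (y : Fin (n + 1) → Cantor), (∀ i, y i ∈ K) ∧ toSet x ⊆ ⋃ i, toSet (y i) := by
  rw [IdealGen, mem_ofPred_eq, List.exists_iff_exists_tuple]
  simp only [List.mem_ofFn', forall_mem_range, biUnion_range]
  constructor
  · rintro ⟨_ | n, y, hne, hy⟩
    · simp at hne
    · exact ⟨n, y, hy⟩
  · rintro ⟨n, y, hy⟩
    exact ⟨n + 1, y, by simp, hy⟩

theorem isFsigma_idealGen (hK : IsClosed K) : IsFsigma (IdealGen K) := by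
  let G (n : ℕ) : Set (Cantor × (Fin (n + 1) → Cantor)) :=
    {z | (∀ i, z.2 i ∈ K) ∧ ∀ k, z.1 k = true → ∃ i, z.2 i k = true}
  have hG : ∀ n, IsClosed (G n) := fun n => by
    have hx (k : ℕ) : IsOpen {z : Cantor × (Fin (n + 1) → Cantor) | z.1 k = true} :=
      (isOpen_discrete {true}).preimage (by fun_prop)
    have hy (k : ℕ) (i : Fin (n + 1)) :
        IsClosed {z : Cantor × (Fin (n + 1) → Cantor) | z.2 i k = true} :=
      (isClosed_discrete {true}).preimage (by fun_prop)
    simp only [G, ofPred_and, ofPred_forall]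
    refine (isClosed_iInter fun i => hK.preimage (by fun_prop)).inter
      (isClosed_iInter fun k => isClosed_imp (hx k) ?_)
    simpa only [ofPred_exists] using isClosed_iUnion_of_finite (hy k)
  refine ⟨fun n => Prod.fst '' G n, fun n => isClosedMap_fst_of_compactSpace _ (hG n), ?_⟩
  ext x
  simp [mem_idealGen_iff, G, toSet, subset_def]

theorem IsFsigma.measurableSet (hJ : IsFsigma J) : MeasurableSet J := by
  obtain ⟨C, hC, rfl⟩ := hJ
  exact .iUnion fun n => (hC n).measurableSet

end Ideal

section ChainAntichain

variable {α : Type*} {r : α → α → Prop}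

theorem isChain_range_of_forall_lt {ι : Type*} [LinearOrder ι] {f : ι → α}
    (h : ∀ m n, m < n → r (f m) (f n) ∨ r (f n) (f m)) : IsChain r (range f) := by
  rintro _ ⟨m, rfl⟩ _ ⟨n, rfl⟩ hne
  rcases lt_or_gt_of_ne (ne_of_apply_ne f hne) with hmn | hnm
  exacts [h m n hmn, (h n m hnm).symm]

theorem isAntichain_range_of_forall_lt {ι : Type*} [LinearOrder ι] {f : ι → α}
    (h : ∀ m n, m < n → ¬ r (f m) (f n) ∧ ¬ r (f n) (f m)) : IsAntichain r (range f) := by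
  rintro _ ⟨m, rfl⟩ _ ⟨n, rfl⟩ hne
  rcases lt_or_gt_of_ne (ne_of_apply_ne f hne) with hmn | hnm
  exacts [(h m n hmn).1, (h n m hnm).2]

theorem exists_infinite_subset_isChain_or_isAntichain [IsTrans α r] {s : Set α}
    (hs : s.Infinite) : ∃ t ⊆ s, t.Infinite ∧ (IsChain r t ∨ IsAntichain r t) := by
  obtain ⟨f, hf, hfs⟩ : ∃ f : ℕ → α, Function.Injective f ∧ ∀ n, f n ∈ s :=
    ⟨fun n => hs.natEmbedding s n, Subtype.val_injective.comp (hs.natEmbedding s).injective,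
      fun n => Subtype.coe_prop _⟩
  have hinf (g : ℕ ↪o ℕ) : (range (f ∘ g)).Infinite :=
    infinite_range_of_injective (hf.comp g.injective)
  have hsub (g : ℕ ↪o ℕ) : range (f ∘ g) ⊆ s := range_subset_iff.2 fun n => hfs _
  obtain ⟨g, hg | hg⟩ := exists_increasing_or_nonincreasing_subseq r f
  · exact ⟨_, hsub g, hinf g, .inl (isChain_range_of_forall_lt fun m n h => .inl (hg m n h))⟩
  obtain ⟨h, hh | hh⟩ := exists_increasing_or_nonincreasing_subseq (Function.swap r) (f ∘ g)
  · exact ⟨_, hsub (h.trans g), hinf (h.trans g),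
      .inl (isChain_range_of_forall_lt fun m n hmn => .inr (hh m n hmn))⟩
  · exact ⟨_, hsub (h.trans g), hinf (h.trans g), .inr (isAntichain_range_of_forall_lt
      fun m n hmn => ⟨hg _ _ (h.strictMono hmn), hh m n hmn⟩)⟩

end ChainAntichain

section Sparse

theorem isLocallyConstant_count (n : ℕ) :
    IsLocallyConstant fun c : Cantor => Nat.count (fun k => c k = true) n := by
  induction n with
  | zero => simpa only [Nat.count_zero] using IsLocallyConstant.of_constant _ fun _ _ => rfl
  | succ n ih =>
    simp only [Nat.count_succ]
    exact ih.comp₂ (isLocallyConstant_apply n) fun m t => m + if t = true then 1 else 0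

theorem exists_eventually_forall_count_le {c : Cantor} (hc : (toSet c).Infinite) (j : ℕ) :
    ∃ N, ∀ᶠ c' : Cantor in 𝓝 c, ∀ m, Nat.count (fun n => c' n = true) m ≤ j → m ≤ N := by
  refine ⟨Nat.nth (fun n => c n = true) j, ?_⟩
  filter_upwards [(isLocallyConstant_count (Nat.nth (fun n => c n = true) j + 1)).eventually_eq c]
    with c' hc' m hm
  by_contra! hlt
  have hcount : j + 1 ≤ Nat.count (fun n => c' n = true) m := by
    rw [← Nat.count_nth_succ_of_infinite hc j, ← hc']
    exact Nat.count_monotone _ hlt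
  omega

theorem exists_infinite_subset_forall_count_le (b : ℕ → ℕ) {s : Set ℕ} (hs : s.Infinite) :
    ∃ c : Cantor, (toSet c).Infinite ∧ toSet c ⊆ s ∧
      ∀ j, Nat.count (fun n => c n = true) (b j) ≤ j := by
  obtain ⟨φ, hφ, hφs⟩ := extraction_forall_of_frequently (P := fun j n => n ∈ s ∧ b j ≤ n)
    fun j => (Nat.frequently_atTop_iff_infinite.2 hs).and_eventually (eventually_ge_atTop (b j))
  have hc : toSet (range φ).boolIndicator = range φ := toSet_boolIndicator _
  refine ⟨(range φ).boolIndicator, ?_, ?_, fun j => ?_⟩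
  · rw [hc]
    exact infinite_range_of_injective hφ.injective
  · rw [hc]
    exact range_subset_iff.2 fun n => (hφs n).1
  · rw [Nat.count_eq_card_filter_range]
    refine (Finset.card_le_card (t := (Finset.range j).image φ) fun n hn => ?_).trans
      (Finset.card_image_le.trans (Finset.card_range j).le)
    rw [Finset.mem_filter, Finset.mem_range, ← mem_iff_boolIndicator] at hn
    obtain ⟨hlt, k, rfl⟩ := hn
    exact Finset.mem_image_of_mem φ
      (Finset.mem_range.2 (hφ.lt_iff_lt.1 (hlt.trans_le (hφs j).2)))

theorem exists_tendsto_of_forall_eventually_le {X : Type*} {u : Ultrafilter X}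
    {f : X → ℕ → ℕ} (hf : ∀ j, ∃ N, ∀ᶠ x in u, f x j ≤ N) : ∃ b, Tendsto f u (𝓝 b) := by
  have hlim : ∀ j, ∃ n, Tendsto (fun x => f x j) u (𝓝 n) := fun j => by
    obtain ⟨N, hN⟩ := hf j
    obtain ⟨n, -, hn⟩ := (finite_Iic N).isCompact.ultrafilter_le_nhds (u.map fun x => f x j)
      (le_principal_iff.2 hN)
    exact ⟨n, hn⟩
  choose b hb using hlim
  exact ⟨b, tendsto_pi_nhds.2 hb⟩

variable {X : Type*}

/-- The pairs `(a, c)` for which some `b` in the section of `F` at `a` is so small, compared with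
the growth of `c`, that `c` has at most `j` elements below `b j`. Limits with infinite `c` then
keep the section of `F` nonempty, although `ℕ → ℕ` is not compact. -/
def sparsePairs (F : Set (X × (ℕ → ℕ))) : Set (X × Cantor) :=
  {w | ∃ b, (w.1, b) ∈ F ∧ ∀ j, Nat.count (fun n => w.2 n = true) (b j) ≤ j}

theorem sparsePairs_union (F G : Set (X × (ℕ → ℕ))) :
    sparsePairs (F ∪ G) = sparsePairs F ∪ sparsePairs G := by
  ext w
  simp only [sparsePairs, mem_ofPred_eq, mem_union, or_and_right, exists_or]

theorem exists_mem_of_mem_closure_sparsePairs [TopologicalSpace X] {F : Set (X × (ℕ → ℕ))}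
    (hF : IsClosed F) {w : X × Cantor} (hw : w ∈ closure (sparsePairs F))
    (hinf : (toSet w.2).Infinite) : ∃ b, (w.1, b) ∈ F := by
  obtain ⟨u, hu, huw⟩ := mem_closure_iff_ultrafilter.1 hw
  have hfst : Tendsto Prod.fst u (𝓝 w.1) := (continuous_fst.tendsto w).mono_left huw
  have hsnd : Tendsto Prod.snd u (𝓝 w.2) := (continuous_snd.tendsto w).mono_left huw
  choose! f hfF hfcount using fun (z : X × Cantor) (hz : z ∈ sparsePairs F) => hz
  obtain ⟨b, hb⟩ := exists_tendsto_of_forall_eventually_le (u := u) (f := f) fun j => by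
    obtain ⟨N, hN⟩ := exists_eventually_forall_count_le hinf j
    refine ⟨N, ?_⟩
    filter_upwards [hu, hsnd.eventually hN] with z hz hzN
    exact hzN _ (hfcount z hz j)
  exact ⟨b, hF.mem_of_tendsto (hfst.prodMk_nhds hb) (mem_of_superset hu hfF)⟩

end Sparse

section Nodes

/-- A numbering of the nodes of the binary tree `2^{<ω}`, by which subsets of the tree are coded as
points of Cantor space. As in `PiNat.res`, the order of the tree is the suffix order. -/
noncomputable def nodeCode : List Bool ≃ ℕ :=
  Classical.choice nonempty_equiv_of_countable

/-- The set of nodes of the binary tree coded by `x`. -/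
def nodes (x : Cantor) : Set (List Bool) :=
  nodeCode ⁻¹' toSet x

variable {x y : Cantor}

theorem image_nodeCode_nodes (x : Cantor) : nodeCode '' nodes x = toSet x :=
  image_preimage_eq _ nodeCode.surjective

theorem exists_nodes_eq (s : Set (List Bool)) : ∃ x, nodes x = s := by
  refine ⟨(nodeCode '' s).boolIndicator, ?_⟩
  rw [nodes, toSet_boolIndicator, preimage_image_eq s nodeCode.injective]

theorem nodes_inf (x y : Cantor) : nodes (x ⊓ y) = nodes x ∩ nodes y := by
  rw [nodes, toSet_inf, preimage_inter, nodes, nodes]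

theorem finite_nodes : (nodes x).Finite ↔ (toSet x).Finite := by
  rw [← image_nodeCode_nodes, finite_image_iff nodeCode.injective.injOn]

theorem infinite_nodes : (nodes x).Infinite ↔ (toSet x).Infinite :=
  not_congr finite_nodes

theorem nodes_subset_nodes : nodes x ⊆ nodes y ↔ toSet x ⊆ toSet y := by
  rw [← image_nodeCode_nodes x, ← image_nodeCode_nodes y,
    image_subset_image_iff nodeCode.injective]

/-- The codes of the sets of pairwise incomparable nodes. -/
def antichains : Set Cantor :=
  {x | IsAntichain (· <:+ ·) (nodes x)}

theorem isClosed_antichains : IsClosed antichains := by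
  have hopen (s : List Bool) : IsOpen {x | s ∈ nodes x} :=
    (isOpen_discrete {true}).preimage
      (by fun_prop : Continuous fun x : Cantor => x (nodeCode s))
  simp only [antichains, IsAntichain, Set.Pairwise, ofPred_forall]
  refine isClosed_iInter fun s => isClosed_imp (hopen s) ?_
  simp only [ofPred_forall]
  exact isClosed_iInter fun t => isClosed_imp (hopen t) isClosed_const

theorem mem_antichains_of_subsingleton (hx : (toSet x).Subsingleton) : x ∈ antichains :=
  (hx.preimage nodeCode.injective).isAntichain _

/-- The code of the set of those nodes on the branch `w.1` whose length belongs to `w.2`. -/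
noncomputable def chain (w : Cantor × Cantor) : Cantor := fun k =>
  let s := nodeCode.symm k
  decide (res w.1 s.length = s) && w.2 s.length

theorem nodes_chain (w : Cantor × Cantor) : nodes (chain w) = res w.1 '' toSet w.2 := by
  ext s
  simp only [nodes, toSet, chain, mem_preimage, mem_ofPred_eq, Equiv.symm_apply_apply,
    Bool.and_eq_true, decide_eq_true_eq, mem_image]
  constructor
  · rintro ⟨hs, hw⟩
    exact ⟨s.length, hw, hs⟩
  · rintro ⟨n, hn, rfl⟩
    simpa using hn

theorem continuous_chain : Continuous chain :=
  continuous_pi fun k =>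
    let s := nodeCode.symm k
    (((isLocallyConstant_res s.length).comp_continuous continuous_fst).comp₂
      ((isLocallyConstant_apply s.length).comp_continuous continuous_snd)
      fun t b => decide (t = s) && b).continuous

theorem infinite_chain {w : Cantor × Cantor} :
    (toSet (chain w)).Infinite ↔ (toSet w.2).Infinite := by
  rw [← infinite_nodes, nodes_chain, infinite_image_iff (injective_res w.1).injOn]

/-- The code of the set of all nodes on the branch `a`. -/
noncomputable def branch (a : Cantor) : Cantor :=
  chain (a, ⊤)

theorem nodes_branch (a : Cantor) : nodes (branch a) = range (res a) := by
  simp [branch, nodes_chain, toSet]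

theorem infinite_branch (a : Cantor) : (toSet (branch a)).Infinite :=
  infinite_chain.2 (by simp [toSet, infinite_univ])

theorem continuous_branch : Continuous branch :=
  continuous_chain.comp (by fun_prop)

theorem finite_inf_branch_of_mem_antichains (a : Cantor) (hx : x ∈ antichains) :
    (toSet (x ⊓ branch a)).Finite := by
  rw [← finite_nodes, nodes_inf, nodes_branch]
  exact (inter_subsingleton_of_isAntichain_of_isChain hx (isChain_range_res a)).finite

theorem exists_mem_antichains_or_subset_branch (hx : (toSet x).Infinite) :
    ∃ y, toSet y ⊆ toSet x ∧ (toSet y).Infinite ∧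
      (y ∈ antichains ∨ ∃ a, toSet y ⊆ toSet (branch a)) := by
  obtain ⟨t, htx, ht, hchain⟩ :=
    exists_infinite_subset_isChain_or_isAntichain (r := (· <:+ ·)) (infinite_nodes.2 hx)
  obtain ⟨y, rfl⟩ := exists_nodes_eq t
  refine ⟨y, nodes_subset_nodes.1 htx, infinite_nodes.1 ht, hchain.symm.imp_right fun hy => ?_⟩
  obtain ⟨a, ha⟩ := exists_subset_range_res_of_isChain hy
  exact ⟨a, nodes_subset_nodes.1 (by rwa [nodes_branch])⟩

end Nodes

section TreeIdeal

variable {F G : Set (Cantor × (ℕ → ℕ))}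

/-- The codes of the sets of nodes that lie on a branch `a`, with set of lengths `c`, where `(a, c)`
is a limit of sparse pairs. -/
def chains (F : Set (Cantor × (ℕ → ℕ))) : Set Cantor :=
  chain '' closure (sparsePairs F)

theorem chains_union (F G : Set (Cantor × (ℕ → ℕ))) : chains (F ∪ G) = chains F ∪ chains G := by
  rw [chains, sparsePairs_union, closure_union, image_union, chains, chains]

theorem isClosed_chains (F : Set (Cantor × (ℕ → ℕ))) : IsClosed (chains F) :=
  (isClosed_closure.isCompact.image continuous_chain).isClosed

theorem finite_inf_branch_of_mem_chains (hF : IsClosed F) {a x : Cantor}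
    (ha : ¬ ∃ b, (a, b) ∈ F) (hx : x ∈ chains F) : (toSet (x ⊓ branch a)).Finite := by
  obtain ⟨w, hw, rfl⟩ := hx
  rw [← finite_nodes, nodes_inf, nodes_branch, nodes_chain]
  rcases eq_or_ne w.1 a with rfl | hne
  · have hfin : (toSet w.2).Finite := by
      by_contra hinf
      exact ha (exists_mem_of_mem_closure_sparsePairs hF hw hinf)
    exact (hfin.image _).inter_of_left _
  · exact (finite_range_res_inter hne).subset (inter_subset_inter_left _ (image_subset_range _ _))

theorem exists_mem_chains_subset {a x : Cantor} (ha : ∃ b, (a, b) ∈ F)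
    (hx : (toSet x).Infinite) (hxa : toSet x ⊆ toSet (branch a)) :
    ∃ y ∈ chains F, (toSet y).Infinite ∧ toSet y ⊆ toSet x := by
  obtain ⟨b, hb⟩ := ha
  have himage : res a '' (res a ⁻¹' nodes x) = nodes x := by
    rwa [image_preimage_eq_iff, ← nodes_branch, nodes_subset_nodes]
  have hlengths : (res a ⁻¹' nodes x).Infinite :=
    Infinite.of_image (res a) (by rwa [himage, infinite_nodes])
  obtain ⟨c, hc, hcx, hcount⟩ := exists_infinite_subset_forall_count_le b hlengths
  refine ⟨chain (a, c), mem_image_of_mem _ (subset_closure ⟨b, hb, hcount⟩),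
    infinite_chain.2 hc, nodes_subset_nodes.1 ?_⟩
  rw [nodes_chain, ← himage]
  exact image_mono hcx

/-- The ideal generated by the antichains of the binary tree and by sufficiently sparse subsets of
those branches over which `F` has a nonempty section. -/
def treeIdeal (F : Set (Cantor × (ℕ → ℕ))) : Set Cantor :=
  IdealGen (antichains ∪ chains F)

theorem isIdeal_treeIdeal (F : Set (Cantor × (ℕ → ℕ))) : IsIdeal (treeIdeal F) :=
  isIdeal_idealGen _

theorem isFsigma_treeIdeal (F : Set (Cantor × (ℕ → ℕ))) : IsFsigma (treeIdeal F) :=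
  isFsigma_idealGen (isClosed_antichains.union (isClosed_chains F))

theorem mem_treeIdeal_of_finite {x : Cantor} (hx : (toSet x).Finite) : x ∈ treeIdeal F :=
  (isIdeal_treeIdeal F).mem_of_finite
    (fun _ hy => subset_idealGen _ (.inl (mem_antichains_of_subsingleton hy))) hx

theorem tall_treeIdeal (hF : ∀ a, ∃ b, (a, b) ∈ F) : Tall (treeIdeal F) := by
  intro x hx
  obtain ⟨y, hyx, hy, hanti | ⟨a, ha⟩⟩ := exists_mem_antichains_or_subset_branch hx
  · exact ⟨y, subset_idealGen _ (.inl hanti), hy, hyx⟩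
  · obtain ⟨z, hzF, hz, hzy⟩ := exists_mem_chains_subset (hF a) hy ha
    exact ⟨z, subset_idealGen _ (.inr hzF), hz, hzy.trans hyx⟩

theorem exists_mem_of_mem_treeIdeal (hF : IsClosed F) {a x : Cantor} (hx : x ∈ treeIdeal F)
    (hinf : (toSet x).Infinite) (hxa : toSet x ⊆ toSet (branch a)) : ∃ b, (a, b) ∈ F := by
  by_contra ha
  have hgen : antichains ∪ chains F ⊆ {x | (toSet (x ⊓ branch a)).Finite} :=
    union_subset (fun _ => finite_inf_branch_of_mem_antichains a)
      fun _ => finite_inf_branch_of_mem_chains hF ha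
  have hfin := idealGen_subset (isIdeal_setOf_finite.setOf_inf_mem (branch a)) hgen hx
  rw [mem_ofPred_eq, mem_ofPred_eq, toSet_inf, inter_eq_left.2 hxa] at hfin
  exact hinf hfin

theorem mem_treeIdeal_of_mem_union (hG : IsClosed G) {a x : Cantor} (ha : ¬ ∃ b, (a, b) ∈ G)
    (hx : x ∈ treeIdeal (F ∪ G)) (hxa : toSet x ⊆ toSet (branch a)) : x ∈ treeIdeal F := by
  have hgen : antichains ∪ chains (F ∪ G) ⊆ {x | x ⊓ branch a ∈ treeIdeal F} := by
    rw [chains_union, ← union_assoc]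
    refine union_subset (fun y hy => (isIdeal_treeIdeal F).1 y (subset_idealGen _ hy) _ ?_)
      fun y hy => mem_treeIdeal_of_finite (finite_inf_branch_of_mem_chains hG ha hy)
    rw [toSet_inf]
    exact inter_subset_left
  refine (isIdeal_treeIdeal F).1 _
    (idealGen_subset ((isIdeal_treeIdeal F).setOf_inf_mem (branch a)) hgen hx) x ?_
  rw [toSet_inf]
  exact subset_inter subset_rfl hxa

theorem exists_measurableSet_of_isSelector (hF : IsClosed F) (hG : IsClosed G)
    {S : Cantor → Cantor} (hS : IsSelector (treeIdeal (F ∪ G)) S) :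
    ∃ A : Set Cantor, MeasurableSet A ∧ (∀ a ∈ A, ∃ b, (a, b) ∈ F) ∧
      ∀ a ∉ A, ∃ b, (a, b) ∈ G := by
  obtain ⟨hmeas, hsel⟩ := hS
  refine ⟨{a | S (branch a) ∈ treeIdeal F}, ?_, fun a ha => ?_, fun a ha => ?_⟩
  · exact hmeas.comp continuous_branch.measurable (isFsigma_treeIdeal F).measurableSet
  · obtain ⟨hsub, hinf, -⟩ := hsel (branch a)
    exact exists_mem_of_mem_treeIdeal hF ha (hinf (infinite_branch a)) hsub
  · obtain ⟨hsub, -, hmem⟩ := hsel (branch a)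
    by_contra hG'
    exact ha (mem_treeIdeal_of_mem_union hG hG' hmem hsub)

end TreeIdeal

/-- There is a tall `Fσ` ideal on `ℕ` without a Borel selector. -/
theorem exists_fsigma_tall_ideal_no_selector :
    ∃ I : Set Cantor, IsIdeal I ∧ IsFsigma I ∧ Tall I ∧
      ¬ ∃ S : Cantor → Cantor, IsSelector I S := by
  refine ⟨treeIdeal (simulations true ∪ simulations false), isIdeal_treeIdeal _,
    isFsigma_treeIdeal _, tall_treeIdeal fun a => ?_, fun ⟨S, hS⟩ => ?_⟩
  · obtain ⟨i, b, hb⟩ := exists_mem_simulations a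
    exact ⟨b, by cases i <;> simp [hb]⟩
  · obtain ⟨A, hA, htrue, hfalse⟩ := exists_measurableSet_of_isSelector
      (isClosed_simulations true) (isClosed_simulations false) hS
    exact not_exists_measurableSet_mem_simulations ⟨A, hA, htrue, hfalse⟩
end

section
/- Let B be a front on ℕ. There is a tall ideal I on ℕ which is coanalytic as a subset of the Cantor space 2^ℕ (i.e. 2^ℕ \ I is analytic) such that for every F ⊆ B the family hom(F) of infinite F-homogeneous sets is not contained in I. -/
open Set

/-!
Fix an almost disjoint family of sets indexed by the points `f` of Cantor space, the branches of
the binary tree. Each `f` also codes a 2-colouring of the finite sets, and a Borel version of the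
Nash-Williams theorem selects an infinite homogeneous subset `Y f` of the `f`-th branch. A set
belongs to the ideal when its trace on every `Y f` lies in the copy on `Y f` of the summable ideal
of the harmonic series. The quantifier over `f` makes the ideal coanalytic. It is tall because an
infinite set meets every `Y f` in a finite set, or else has an infinite subset of finite mass
inside one of them, which is almost disjoint from all the others. It omits `Y f` because the
harmonic series diverges.

The Borel Nash-Williams theorem is proved by induction along the well-founded tree of the front.
At a node the selections for its successors are combined by a fusion, and the pivots of the fusion
are split by the colour that each of them forces.
-/

theorem toSet_decide_mem (x : Set ℕ) [DecidablePred (· ∈ x)] :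
    toSet (fun n => decide (n ∈ x)) = x := by
  ext n
  simp [toSet]

section MeasurableSets

variable {Ω : Type*} [MeasurableSpace Ω]

theorem measurable_toSet : Measurable toSet :=
  measurable_set_iff.2 fun n =>
    (measurable_of_countable fun b : Bool => b = true).comp (measurable_pi_apply n)

theorem measurable_infinite {y : Ω → Set ℕ} (hy : Measurable y) :
    Measurable fun ω => (y ω).Infinite := by
  simp only [Set.infinite_iff_exists_gt]
  exact .forall fun _ => .exists fun n => (measurable_set_iff.1 hy n).and measurable_const

theorem measurable_sInf_nat : Measurable (sInf : Set ℕ → ℕ) := by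
  classical
  have exists_mem_or_empty (x : Set ℕ) : ∃ n, n ∈ x ∨ x = ∅ := by
    rcases x.eq_empty_or_nonempty with hx | ⟨n, hn⟩
    exacts [⟨0, .inr hx⟩, ⟨n, .inl hn⟩]
  have sInf_eq_find (x : Set ℕ) : sInf x = Nat.find (exists_mem_or_empty x) := by
    rcases x.eq_empty_or_nonempty with hx | hx
    · rw [(Nat.find_eq_zero _).2 (.inr hx), hx, Nat.sInf_empty]
    · simp [Nat.sInf_def hx, hx.ne_empty]
  have measurable_empty : Measurable fun x : Set ℕ => x = ∅ := by
    simp only [Set.eq_empty_iff_forall_notMem]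
    exact .forall measurable_set_notMem
  rw [funext sInf_eq_find]
  exact measurable_find exists_mem_or_empty fun n =>
    ((measurable_set_mem n).or measurable_empty).setOf

open Classical in
theorem measurable_count {y : Ω → Set ℕ} (hy : Measurable y) (n : ℕ) :
    Measurable fun ω => Nat.count (· ∈ y ω) n := by
  induction n with
  | zero => simp
  | succ n ih =>
    simp only [Nat.count_succ]
    exact ih.add (.ite (measurable_set_iff.1 hy n).setOf measurable_const measurable_const)

end MeasurableSets

section Fusion

/-- The decreasing sequence of sets starting at `x` in which each set `y` is followed by
`R (sInf y) y`. Its diagonal is the sequence of the minima, called pivots. -/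
noncomputable def fusion (R : ℕ → Set ℕ → Set ℕ) (x : Set ℕ) : ℕ → Set ℕ
  | 0 => x
  | i + 1 => R (sInf (fusion R x i)) (fusion R x i)

/-- `R n` shrinks every infinite set to an infinite subset lying above `n`. -/
def IsShrinking (R : ℕ → Set ℕ → Set ℕ) : Prop :=
  ∀ n x, x.Infinite → R n x ⊆ x ∩ Ioi n ∧ (R n x).Infinite

variable {R : ℕ → Set ℕ → Set ℕ} {x : Set ℕ}

theorem infinite_fusion (hR : IsShrinking R) (hx : x.Infinite) (i : ℕ) :
    (fusion R x i).Infinite := by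
  induction i with
  | zero => exact hx
  | succ i ih => exact (hR _ _ ih).2

theorem fusion_succ_subset (hR : IsShrinking R) (hx : x.Infinite) (i : ℕ) :
    fusion R x (i + 1) ⊆ fusion R x i ∩ Ioi (sInf (fusion R x i)) :=
  (hR _ _ (infinite_fusion hR hx i)).1

theorem antitone_fusion (hR : IsShrinking R) (hx : x.Infinite) : Antitone (fusion R x) :=
  antitone_nat_of_succ_le fun i => (fusion_succ_subset hR hx i).trans inter_subset_left

theorem sInf_fusion_mem (hR : IsShrinking R) (hx : x.Infinite) {i j : ℕ} (hij : i ≤ j) :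
    sInf (fusion R x j) ∈ fusion R x i :=
  antitone_fusion hR hx hij (Nat.sInf_mem (infinite_fusion hR hx j).nonempty)

theorem strictMono_sInf_fusion (hR : IsShrinking R) (hx : x.Infinite) :
    StrictMono fun i => sInf (fusion R x i) :=
  strictMono_nat_of_lt_succ fun i =>
    (fusion_succ_subset hR hx i (sInf_fusion_mem hR hx le_rfl)).2

theorem measurable_fusion {Ω : Type*} [MeasurableSpace Ω] {R : Ω → ℕ → Set ℕ → Set ℕ}
    {x : Ω → Set ℕ} (hR : ∀ n, Measurable fun p : Ω × Set ℕ => R p.1 n p.2)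
    (hx : Measurable x) (i : ℕ) : Measurable fun ω => fusion (R ω) (x ω) i := by
  induction i with
  | zero => exact hx
  | succ i ih =>
    have hR' : Measurable fun p : ℕ × Ω × Set ℕ => R p.2.1 p.1 p.2.2 :=
      measurable_from_prod_countable_right hR
    exact hR'.comp ((measurable_sInf_nat.comp ih).prodMk (measurable_id.prodMk ih))

end Fusion

section BorelRamsey

/-- Every member of `A` that is contained in `y` has colour `b` under `c`. -/
def IsMonochromatic (A : Set (Finset ℕ)) (c : Finset ℕ → Bool) (b : Bool) (y : Set ℕ) : Prop :=
  ∀ t ∈ A, (t : Set ℕ) ⊆ y → c t = b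

/-- The family `A` is Ramsey, uniformly in a Borel way: a Borel map sends each 2-colouring and
each infinite set to an infinite subset on which the colouring is constant on `A`. -/
def BorelRamsey (A : Set (Finset ℕ)) : Prop :=
  ∃ S : (Finset ℕ → Bool) → Set ℕ → Set ℕ, Measurable (Function.uncurry S) ∧
    ∀ c x, x.Infinite → S c x ⊆ x ∧ (S c x).Infinite ∧ ∃ b, IsMonochromatic A c b (S c x)

/-- The family of those `t`, lying above `s`, for which `s ∪ t` belongs to `A`. Since
`sup ∅ = 0`, every member of `tails A ∅` omits `0`. -/
def tails (A : Set (Finset ℕ)) (s : Finset ℕ) : Set (Finset ℕ) :=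
  {t | (∀ k ∈ t, s.sup id < k) ∧ s ∪ t ∈ A}

theorem BorelRamsey.of_subset_singleton_empty {A : Set (Finset ℕ)} (hA : A ⊆ {∅}) :
    BorelRamsey A :=
  ⟨fun _ x => x, measurable_snd, fun c _ hx =>
    ⟨subset_rfl, hx, c ∅, fun _ ht _ => congrArg c (hA ht)⟩⟩

theorem measurable_isMonochromatic {Ω : Type*} [MeasurableSpace Ω] {c : Ω → Finset ℕ → Bool}
    {y : Ω → Set ℕ} (hc : Measurable c) (hy : Measurable y) (A : Set (Finset ℕ)) (b : Bool) :
    Measurable fun ω => IsMonochromatic A (c ω) b (y ω) := by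
  have measurable_color (t : Finset ℕ) : Measurable fun ω => c ω t = b :=
    (measurable_of_countable (· = b)).comp ((measurable_pi_apply t).comp hc)
  have measurable_subset (t : Finset ℕ) : Measurable fun ω => (t : Set ℕ) ⊆ y ω :=
    .forall fun n => measurable_const.imp (measurable_set_iff.1 hy n)
  exact .forall fun t => measurable_const.imp ((measurable_subset t).imp (measurable_color t))

/-- The pivots `n` of a fusion sequence after which the colouring `t ↦ c ({n} ∪ t)` of
`tails A {n}` takes the value `b` only. -/
def monochromaticPivots (A : Set (Finset ℕ)) (R : ℕ → Set ℕ → Set ℕ) (c : Finset ℕ → Bool)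
    (x : Set ℕ) (b : Bool) : Set ℕ :=
  {n | ∃ i, sInf (fusion R x i) = n ∧
    IsMonochromatic (tails A {n}) (fun t => c ({n} ∪ t)) b (fusion R x (i + 1))}

theorem monochromaticPivots_subset {R : ℕ → Set ℕ → Set ℕ} (hR : IsShrinking R) {x : Set ℕ}
    (hx : x.Infinite) (A : Set (Finset ℕ)) (c : Finset ℕ → Bool) (b : Bool) :
    monochromaticPivots A R c x b ⊆ x := by
  rintro _ ⟨i, rfl, -⟩
  exact sInf_fusion_mem hR hx i.zero_le

theorem erase_min'_mem_tails {A : Set (Finset ℕ)} {t : Finset ℕ} (ht : t ∈ A)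
    (hne : t.Nonempty) : t.erase (t.min' hne) ∈ tails A {t.min' hne} := by
  refine ⟨fun k hk => ?_, ?_⟩
  · simpa using t.min'_lt_of_mem_erase_min' hne hk
  · rwa [← Finset.insert_eq, Finset.insert_erase (t.min'_mem hne)]

theorem isMonochromatic_monochromaticPivots {A : Set (Finset ℕ)} (hA : ∅ ∉ A)
    {R : ℕ → Set ℕ → Set ℕ} (hR : IsShrinking R) {x : Set ℕ} (hx : x.Infinite)
    (c : Finset ℕ → Bool) (b : Bool) :
    IsMonochromatic A c b (monochromaticPivots A R c x b) := by
  intro t htA htH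
  have hne : t.Nonempty := Finset.nonempty_iff_ne_empty.2 fun h => hA (h ▸ htA)
  obtain ⟨i, hi, hmono⟩ := htH (t.min'_mem hne)
  have tail_subset : (t.erase (t.min' hne) : Set ℕ) ⊆ fusion R x (i + 1) := by
    intro k hk
    obtain ⟨j, rfl, -⟩ := htH (Finset.mem_of_mem_erase hk)
    have hlt := t.min'_lt_of_mem_erase_min' hne hk
    rw [← hi] at hlt
    exact sInf_fusion_mem hR hx ((strictMono_sInf_fusion hR hx).lt_iff_lt.1 hlt)
  have color_eq : c ({t.min' hne} ∪ t.erase (t.min' hne)) = b :=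
    hmono _ (erase_min'_mem_tails htA hne) tail_subset
  rwa [← Finset.insert_eq, Finset.insert_erase (t.min'_mem hne)] at color_eq

theorem exists_infinite_monochromaticPivots {A : Set (Finset ℕ)} {R : ℕ → Set ℕ → Set ℕ}
    (hR : IsShrinking R) {x : Set ℕ} (hx : x.Infinite) {c : Finset ℕ → Bool}
    (hmono : ∀ n y, y.Infinite →
      ∃ b, IsMonochromatic (tails A {n}) (fun t => c ({n} ∪ t)) b (R n y)) :
    (monochromaticPivots A R c x true).Infinite ∨
      (monochromaticPivots A R c x false).Infinite := by
  rw [← Set.infinite_union]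
  refine (Set.infinite_range_of_injective (strictMono_sInf_fusion hR hx).injective).mono ?_
  rintro _ ⟨i, rfl⟩
  obtain ⟨b, hb⟩ := hmono (sInf (fusion R x i)) _ (infinite_fusion hR hx i)
  cases b
  · exact .inr ⟨i, rfl, hb⟩
  · exact .inl ⟨i, rfl, hb⟩

theorem measurable_monochromaticPivots {Ω : Type*} [MeasurableSpace Ω]
    {R : Ω → ℕ → Set ℕ → Set ℕ} (hR : ∀ n, Measurable fun p : Ω × Set ℕ => R p.1 n p.2)
    {c : Ω → Finset ℕ → Bool} (hc : Measurable c) {x : Ω → Set ℕ} (hx : Measurable x)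
    (A : Set (Finset ℕ)) (b : Bool) :
    Measurable fun ω => monochromaticPivots A (R ω) (c ω) (x ω) b := by
  have measurable_tail_coloring (n : ℕ) : Measurable fun ω t => c ω ({n} ∪ t) :=
    measurable_pi_iff.2 fun t => (measurable_pi_apply (({n} : Finset ℕ) ∪ t)).comp hc
  have measurable_pivot_eq (i n : ℕ) : Measurable fun ω => sInf (fusion (R ω) (x ω) i) = n :=
    (measurable_of_countable (· = n)).comp (measurable_sInf_nat.comp (measurable_fusion hR hx i))
  exact measurable_set_iff.2 fun n => .exists fun i => (measurable_pivot_eq i n).and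
    (measurable_isMonochromatic (measurable_tail_coloring n) (measurable_fusion hR hx (i + 1)) _ b)

theorem BorelRamsey.of_tails_singleton {A : Set (Finset ℕ)} (hA : ∅ ∉ A)
    (h : ∀ n, BorelRamsey (tails A {n})) : BorelRamsey A := by
  classical
  choose T measurable_T hT using h
  let R (c : Finset ℕ → Bool) (n : ℕ) (y : Set ℕ) : Set ℕ :=
    T n (fun t => c ({n} ∪ t)) (y ∩ Ioi n)
  have infinite_above (n : ℕ) {y : Set ℕ} (hy : y.Infinite) : (y ∩ Ioi n).Infinite := by
    simpa [Set.sdiff_eq] using hy.sdiff (Set.finite_Iic n)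
  have shrinking (c) : IsShrinking (R c) := fun n y hy =>
    ⟨(hT n _ _ (infinite_above n hy)).1, (hT n _ _ (infinite_above n hy)).2.1⟩
  have measurable_R (n : ℕ) :
      Measurable fun p : ((Finset ℕ → Bool) × Set ℕ) × Set ℕ => R p.1.1 n p.2 := by
    refine (measurable_T n).comp (.prodMk ?_ ?_)
    · exact measurable_pi_iff.2 fun t =>
        (measurable_pi_apply ({n} ∪ t)).comp (measurable_fst.comp measurable_fst)
    · exact measurable_set_iff.2 fun k =>
        (measurable_set_iff.1 measurable_snd k).and measurable_const
  let H (b : Bool) (p : (Finset ℕ → Bool) × Set ℕ) : Set ℕ :=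
    monochromaticPivots A (R p.1) p.1 p.2 b
  have measurable_H (b : Bool) : Measurable (H b) :=
    measurable_monochromaticPivots measurable_R measurable_fst measurable_snd A b
  refine ⟨fun c x => if (H true (c, x)).Infinite then H true (c, x) else H false (c, x),
    .ite (measurable_infinite (measurable_H true)).setOf (measurable_H true) (measurable_H false),
    fun c x hx => ?_⟩
  suffices ∀ b, (H b (c, x)).Infinite →
      H b (c, x) ⊆ x ∧ (H b (c, x)).Infinite ∧ ∃ b', IsMonochromatic A c b' (H b (c, x)) by
    have exists_infinite : (H true (c, x)).Infinite ∨ (H false (c, x)).Infinite :=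
      exists_infinite_monochromaticPivots (shrinking c) hx fun n y hy =>
        (hT n _ _ (infinite_above n hy)).2.2
    dsimp only
    split_ifs with htrue
    exacts [this true htrue, this false (exists_infinite.resolve_left htrue)]
  exact fun b hb => ⟨monochromaticPivots_subset (shrinking c) hx A c b, hb, b,
    isMonochromatic_monochromaticPivots hA (shrinking c) hx c b⟩

theorem tails_tails_singleton {A : Set (Finset ℕ)} {s : Finset ℕ} {n : ℕ} (hn : s.sup id < n) :
    tails (tails A s) {n} = tails A (insert n s) := by
  have sup_insert : (insert n s).sup id = n := by simpa using hn.le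
  ext t
  simp only [tails, mem_ofPred_eq, Finset.sup_singleton, id, sup_insert, ← Finset.insert_eq,
    Finset.insert_union, Finset.union_insert, Finset.forall_mem_insert]
  exact ⟨fun h => ⟨h.1, h.2.2⟩, fun h => ⟨h.1, ⟨hn, fun k hk => hn.trans (h.1 k hk)⟩, h.2⟩⟩

theorem tails_tails_singleton_of_le {A : Set (Finset ℕ)} {s : Finset ℕ} {n : ℕ}
    (hn : n ≤ s.sup id) : tails (tails A s) {n} = ∅ :=
  Set.eq_empty_of_forall_notMem fun _ ht =>
    hn.not_gt (ht.2.1 n (Finset.mem_union_left _ (Finset.mem_singleton_self n)))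

end BorelRamsey

section Fronts

variable {B : Set (Finset ℕ)} {x : Set ℕ}

theorem InitSeg.exists_eq_image_range {a : ℕ → ℕ} (ha : StrictMono a) {t : Finset ℕ}
    (ht : InitSeg t (range a)) : ∃ i, t = (Finset.range i).image a := by
  obtain ⟨m, hm⟩ := ht
  have exists_gt : ∃ i, m < a i := ⟨m + 1, Nat.lt_of_lt_of_le m.lt_succ_self ha.le_apply⟩
  have le_iff (j : ℕ) : a j ≤ m ↔ j < Nat.find exists_gt := by
    refine ⟨fun hj => ?_, fun hj => not_lt.1 (Nat.find_min exists_gt hj)⟩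
    exact ha.lt_iff_lt.1 (hj.trans_lt (Nat.find_spec exists_gt))
  refine ⟨Nat.find exists_gt, Finset.coe_injective ?_⟩
  rw [hm]
  ext k
  simp only [mem_inter_iff, mem_range, mem_Iic, Finset.coe_image, Finset.coe_range, mem_image,
    mem_Iio, ← le_iff]
  constructor
  · rintro ⟨⟨j, rfl⟩, hj⟩
    exact ⟨j, hj, rfl⟩
  · rintro ⟨j, hj, rfl⟩
    exact ⟨⟨j, rfl⟩, hj⟩

theorem bar_induction {P : Finset ℕ → Prop}
    (hB : ∀ y : Set ℕ, y.Infinite → ∃ s ∈ B, InitSeg s y) (mem : ∀ s ∈ B, P s)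
    (step : ∀ s ∉ B, (∀ n, s.sup id < n → P (insert n s)) → P s) : P ∅ := by
  by_contra not_P_empty
  have extend (s : {s // ¬ P s}) : ∃ n, s.1.sup id < n ∧ ¬ P (insert n s.1) := by
    by_contra! h
    exact s.2 (step s (fun hs => s.2 (mem s hs)) h)
  choose next sup_lt_next not_P_next using extend
  let s (i : ℕ) : {s // ¬ P s} :=
    (fun s => ⟨insert (next s) s.1, not_P_next s⟩)^[i] ⟨∅, not_P_empty⟩
  let a (i : ℕ) : ℕ := next (s i)
  have s_succ (i : ℕ) : (s (i + 1)).1 = insert (a i) (s i).1 :=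
    congrArg Subtype.val (Function.iterate_succ_apply' _ i _)
  have s_eq (i : ℕ) : (s i).1 = (Finset.range i).image a := by
    induction i with
    | zero => rfl
    | succ i ih => rw [s_succ, ih, Finset.range_add_one, Finset.image_insert]
  have strictMono_a : StrictMono a := strictMono_nat_of_lt_succ fun i => by
    refine lt_of_le_of_lt (Finset.le_sup (f := id) ?_) (sup_lt_next (s (i + 1)))
    exact s_succ i ▸ Finset.mem_insert_self _ _
  obtain ⟨t, htB, ht⟩ := hB (range a) (Set.infinite_range_of_injective strictMono_a.injective)
  obtain ⟨i, rfl⟩ := ht.exists_eq_image_range strictMono_a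
  exact (s i).2 (s_eq i ▸ mem _ htB)

theorem IsFrontOn.tails_subset_singleton_empty (hB : IsFrontOn B x) {s : Finset ℕ} (hs : s ∈ B) :
    tails B s ⊆ {∅} := by
  rintro t ⟨above, hst⟩
  have initSegF : InitSegF s (s ∪ t) := by
    refine ⟨s.sup id, ?_⟩
    ext k
    simp only [Finset.mem_inter, Finset.mem_union, Finset.mem_Iic]
    refine ⟨fun hk => ⟨.inl hk, Finset.le_sup (f := id) hk⟩, fun ⟨hk, hle⟩ => ?_⟩
    exact hk.resolve_right fun hkt => (above k hkt).not_ge hle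
  have subset_s : t ⊆ s := by
    rw [hB.2.1 s hs _ hst initSegF]
    exact Finset.subset_union_right
  refine Finset.eq_empty_of_forall_notMem fun k hk => ?_
  exact (above k hk).not_ge (Finset.le_sup (f := id) (subset_s hk))

theorem IsFrontOn.borelRamsey_tails_empty (hB : IsFrontOn B univ) : BorelRamsey (tails B ∅) := by
  refine bar_induction (P := fun s => BorelRamsey (tails B s))
    (fun y => hB.2.2 y (subset_univ y))
    (fun s hs => .of_subset_singleton_empty (hB.tails_subset_singleton_empty hs))
    (fun s hs ih => .of_tails_singleton (fun h => hs (by simpa using h.2)) fun n => ?_)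
  rcases lt_or_ge (s.sup id) n with hn | hn
  · rw [tails_tails_singleton hn]
    exact ih n hn
  · rw [tails_tails_singleton_of_le hn]
    exact .of_subset_singleton_empty (empty_subset _)

theorem IsFrontOn.homog_of_isMonochromatic (hB : IsFrontOn B x) {c : Finset ℕ → Bool} {b : Bool}
    {y : Set ℕ} (hyx : y ⊆ x) (hy : IsMonochromatic B c b y) :
    Homog {s ∈ B | c s = true} y := by
  cases b with
  | false => exact .inr fun s hsy hs => by simp [hy s hs.1 hsy] at hs
  | true =>
    refine .inl fun z hzy hz => ?_
    obtain ⟨s, hsB, n, hn⟩ := hB.2.2 z (hzy.trans hyx) hz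
    have subset_y : (s : Set ℕ) ⊆ y := hn ▸ inter_subset_left.trans hzy
    exact ⟨s, ⟨hsB, hy s hsB subset_y⟩, n, hn⟩

theorem IsFrontOn.exists_measurable_homog (hB : IsFrontOn B univ) :
    ∃ S : (Finset ℕ → Bool) → Set ℕ → Set ℕ, Measurable (Function.uncurry S) ∧
      ∀ c x, x.Infinite →
        S c x ⊆ x ∧ (S c x).Infinite ∧ Homog {s ∈ B | c s = true} (S c x) := by
  obtain ⟨S, measurable_S, hS⟩ := hB.borelRamsey_tails_empty
  have measurable_diff_zero :
      Measurable fun p : (Finset ℕ → Bool) × Set ℕ => (p.1, p.2 \ {0}) :=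
    measurable_fst.prodMk <| measurable_set_iff.2 fun k =>
      (measurable_set_iff.1 measurable_snd k).and measurable_const
  refine ⟨fun c x => S c (x \ {0}), measurable_S.comp measurable_diff_zero, fun c x hx => ?_⟩
  obtain ⟨subset, infinite, b, hb⟩ := hS c (x \ {0}) (hx.sdiff (finite_singleton 0))
  refine ⟨subset.trans sdiff_subset, infinite,
    hB.homog_of_isMonochromatic (subset_univ _) (b := b) ?_⟩
  exact fun t htB hty => hb t
    ⟨fun k hk => Nat.pos_of_ne_zero (subset (hty hk)).2, by rwa [Finset.empty_union]⟩ hty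

end Fronts

section AlmostDisjoint

variable {α : Type*} [Encodable α]

/-- The codes of the finite initial segments of a sequence. Distinct sequences share only finitely
many initial segments, so these sets are almost disjoint. -/
def branchCodes (f : ℕ → α) : Set ℕ := range fun k => Encodable.encode (PiNat.res f k)

theorem infinite_branchCodes (f : ℕ → α) : (branchCodes f).Infinite := by
  refine Set.infinite_range_of_injective fun k l hkl => ?_
  simpa using congrArg List.length (Encodable.encode_injective hkl)

theorem finite_branchCodes_inter {f g : ℕ → α} (hfg : f ≠ g) :
    (branchCodes f ∩ branchCodes g).Finite := by
  obtain ⟨i, hi⟩ := Function.ne_iff.1 hfg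
  refine ((Set.finite_Iic i).image fun k => Encodable.encode (PiNat.res f k)).subset ?_
  rintro _ ⟨⟨k, rfl⟩, l, hl⟩
  have res_eq : PiNat.res g l = PiNat.res f k := Encodable.encode_injective hl
  obtain rfl : l = k := by simpa using congrArg List.length res_eq
  exact ⟨l, not_lt.1 fun hil => hi (PiNat.res_eq_res.1 res_eq hil).symm, rfl⟩

theorem measurable_encode_res [MeasurableSpace α] [MeasurableSingletonClass α] (k : ℕ) :
    Measurable fun f : ℕ → α => Encodable.encode (PiNat.res f k) := by
  induction k with
  | zero => exact measurable_const
  | succ k ih =>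
    simp only [PiNat.res_succ, Encodable.encode_list_cons]
    exact (measurable_of_countable fun p : α × ℕ => (Nat.pair (Encodable.encode p.1) p.2).succ).comp
      ((measurable_pi_apply k).prodMk ih)

theorem measurable_branchCodes [MeasurableSpace α] [MeasurableSingletonClass α] :
    Measurable (branchCodes : (ℕ → α) → Set ℕ) :=
  measurable_set_iff.2 fun n => .exists fun k =>
    (measurable_of_countable (· = n)).comp (measurable_encode_res k)

theorem IsFrontOn.exists_measurable_almostDisjoint_homog {B : Set (Finset ℕ)}
    (hB : IsFrontOn B univ) :
    ∃ Y : Cantor → Set ℕ, Measurable Y ∧ (∀ f, (Y f).Infinite) ∧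
      (∀ f g, f ≠ g → (Y f ∩ Y g).Finite) ∧ ∀ F ⊆ B, ∃ f, Homog F (Y f) := by
  classical
  obtain ⟨S, measurable_S, hS⟩ := hB.exists_measurable_homog
  let coloring (f : Cantor) (s : Finset ℕ) : Bool := f (Encodable.encode s)
  have measurable_coloring : Measurable coloring :=
    measurable_pi_iff.2 fun s => measurable_pi_apply (Encodable.encode s)
  have selected (f : Cantor) := hS (coloring f) (branchCodes f) (infinite_branchCodes f)
  refine ⟨fun f => S (coloring f) (branchCodes f),
    measurable_S.comp (measurable_coloring.prodMk measurable_branchCodes),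
    fun f => (selected f).2.1,
    fun f g hfg => (finite_branchCodes_inter hfg).subset
      (inter_subset_inter (selected f).1 (selected g).1), fun F hF => ?_⟩
  let f : Cantor := fun n => decide (∃ s ∈ F, Encodable.encode s = n)
  have F_eq : {s ∈ B | coloring f s = true} = F := by
    ext s
    simpa [coloring, f] using @hF s
  exact ⟨f, F_eq ▸ (selected f).2.2⟩

end AlmostDisjoint

section HarmonicIdeal

open scoped ENNReal NNReal
open Filter Topology

theorem exists_infinite_subset_tsum_lt_top {w : ℕ → ℝ≥0∞} (hw : Tendsto w atTop (𝓝 0))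
    {x : Set ℕ} (hx : x.Infinite) : ∃ z ⊆ x, z.Infinite ∧ ∑' n : z, w n < ∞ := by
  have frequently_small (k : ℕ) : ∃ᶠ n in atTop, n ∈ x ∧ w n ≤ 2⁻¹ ^ k :=
    (Nat.frequently_atTop_iff_infinite.2 hx).and_eventually
      (hw.eventually_le_const (ENNReal.pow_pos (by simp) k))
  obtain ⟨φ, strictMono_φ, hφ⟩ := extraction_forall_of_frequently frequently_small
  refine ⟨range φ, range_subset_iff.2 fun k => (hφ k).1,
    Set.infinite_range_of_injective strictMono_φ.injective, ?_⟩
  calc ∑' n : range φ, w n = ∑' k, w (φ k) := tsum_range w strictMono_φ.injective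
    _ ≤ ∑' k : ℕ, 2⁻¹ ^ k := ENNReal.tsum_le_tsum fun k => (hφ k).2
    _ = 2 := ENNReal.tsum_geometric_two
    _ < ∞ := ENNReal.ofNat_lt_top

theorem tsum_inv_natCast_add_one : ∑' n : ℕ, ((n : ℝ≥0∞) + 1)⁻¹ = ∞ := by
  have not_summable : ¬ Summable fun n : ℕ => ((n : ℝ≥0) + 1)⁻¹ := by
    rw [← NNReal.summable_coe]
    simpa using mt (summable_nat_add_iff 1).1 Real.not_summable_natCast_inv
  have tsum_coe_eq_top := mt ENNReal.tsum_coe_ne_top_iff_summable.1 not_summable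
  push Not at tsum_coe_eq_top
  simpa [ENNReal.coe_inv] using tsum_coe_eq_top

open Classical in
/-- The weight `1 / (k + 1)` of the `k`-th element of `y`. -/
noncomputable def harmonicWeight (y : Set ℕ) (n : ℕ) : ℝ≥0∞ :=
  ((Nat.count (· ∈ y) n : ℝ≥0∞) + 1)⁻¹

/-- The sum of the weights of the elements of `x ∩ y`. Enumerating `y` carries the sets of finite
mass to the summable ideal of the harmonic series. -/
noncomputable def harmonicMass (y x : Set ℕ) : ℝ≥0∞ :=
  ∑' n : ↥(x ∩ y), harmonicWeight y n

theorem harmonicWeight_lt_top (y : Set ℕ) (n : ℕ) : harmonicWeight y n < ∞ := by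
  simp [harmonicWeight]

theorem tendsto_harmonicWeight {y : Set ℕ} (hy : y.Infinite) :
    Tendsto (harmonicWeight y) atTop (𝓝 0) := by
  classical
  have tendsto_count : Tendsto (Nat.count (· ∈ y)) atTop atTop :=
    (Nat.count_monotone _).tendsto_atTop_atTop fun k =>
      ⟨Nat.nth (· ∈ y) k, (Nat.count_nth_of_infinite (p := (· ∈ y)) hy k).ge⟩
  have tendsto_inv : Tendsto (fun k : ℕ => ((k : ℝ≥0∞) + 1)⁻¹) atTop (𝓝 0) := by
    exact_mod_cast (tendsto_add_atTop_iff_nat 1).2 ENNReal.tendsto_inv_nat_nhds_zero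
  exact tendsto_inv.comp tendsto_count

theorem harmonicMass_mono (y : Set ℕ) {x x' : Set ℕ} (h : x ⊆ x') :
    harmonicMass y x ≤ harmonicMass y x' :=
  ENNReal.tsum_mono_subtype _ (inter_subset_inter_left y h)

theorem harmonicMass_union_le (y x x' : Set ℕ) :
    harmonicMass y (x ∪ x') ≤ harmonicMass y x + harmonicMass y x' := by
  rw [harmonicMass, union_inter_distrib_right]
  exact ENNReal.tsum_union_le _ _ _

theorem harmonicMass_lt_top_of_finite {y x : Set ℕ} (h : (x ∩ y).Finite) :
    harmonicMass y x < ∞ := by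
  have := h.fintype
  rw [harmonicMass, tsum_fintype]
  exact ENNReal.sum_lt_top.2 fun n _ => harmonicWeight_lt_top y n

theorem harmonicMass_self {y : Set ℕ} (hy : y.Infinite) : harmonicMass y y = ∞ := by
  classical
  let nthElement (k : ℕ) : ↥(y ∩ y) :=
    ⟨Nat.nth (· ∈ y) k, by simpa using Nat.nth_mem_of_infinite (p := (· ∈ y)) hy k⟩
  have injective_nthElement : Function.Injective nthElement := fun k l hkl =>
    Nat.nth_injective (p := (· ∈ y)) hy (congrArg Subtype.val hkl)
  have weight_nthElement (k : ℕ) : harmonicWeight y (nthElement k) = ((k : ℝ≥0∞) + 1)⁻¹ := by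
    have count_eq : Nat.count (· ∈ y) (nthElement k) = k :=
      Nat.count_nth_of_infinite (p := (· ∈ y)) hy k
    exact congrArg (fun m : ℕ => ((m : ℝ≥0∞) + 1)⁻¹) count_eq
  refine top_unique ?_
  calc ∞ = ∑' k, harmonicWeight y (nthElement k) := by
        simp only [weight_nthElement, tsum_inv_natCast_add_one]
    _ ≤ harmonicMass y y := ENNReal.tsum_comp_le_tsum_of_injective injective_nthElement
        fun n : ↥(y ∩ y) => harmonicWeight y n

theorem exists_infinite_subset_harmonicMass_lt_top {x y : Set ℕ} (h : (x ∩ y).Infinite) :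
    ∃ z ⊆ x ∩ y, z.Infinite ∧ harmonicMass y z < ∞ := by
  obtain ⟨z, hz, infinite_z, sum_lt_top⟩ :=
    exists_infinite_subset_tsum_lt_top (tendsto_harmonicWeight (h.mono inter_subset_right)) h
  exact ⟨z, hz, infinite_z,
    (ENNReal.tsum_mono_subtype _ inter_subset_left).trans_lt sum_lt_top⟩

variable {Ω : Type*}

theorem measurable_harmonicMass [MeasurableSpace Ω] {x y : Ω → Set ℕ} (hx : Measurable x)
    (hy : Measurable y) : Measurable fun ω => harmonicMass (y ω) (x ω) := by
  classical
  simp only [harmonicMass, tsum_subtype, indicator_apply]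
  refine Measurable.tsum fun n => .ite ?_ ?_ measurable_const
  · exact ((measurable_set_iff.1 hx n).and (measurable_set_iff.1 hy n)).setOf
  · unfold harmonicWeight
    exact (((measurable_of_countable Nat.cast).comp (measurable_count hy n)).add_const 1).inv

/-- The sets whose trace on each `Y ω` lies in the harmonic summable ideal of `Y ω`. -/
def harmonicIdeal (Y : Ω → Set ℕ) : Set Cantor :=
  {x | ∀ ω, harmonicMass (Y ω) (toSet x) < ∞}

theorem isIdeal_harmonicIdeal (Y : Ω → Set ℕ) : IsIdeal (harmonicIdeal Y) := by
  refine ⟨fun x hx y hyx ω => (harmonicMass_mono _ hyx).trans_lt (hx ω), fun x hx y hy ω => ?_⟩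
  have toSet_or : toSet (fun n => x n || y n) = toSet x ∪ toSet y := by
    ext n
    simp [toSet]
  rw [toSet_or]
  exact (harmonicMass_union_le _ _ _).trans_lt (ENNReal.add_lt_top.2 ⟨hx ω, hy ω⟩)

theorem notMem_harmonicIdeal {Y : Ω → Set ℕ} {ω : Ω} {x : Cantor} (hx : toSet x = Y ω)
    (infinite_x : (toSet x).Infinite) : x ∉ harmonicIdeal Y := fun h =>
  (h ω).ne (hx ▸ harmonicMass_self infinite_x)

theorem tall_harmonicIdeal {Y : Ω → Set ℕ} (hY : ∀ ω η, ω ≠ η → (Y ω ∩ Y η).Finite) :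
    Tall (harmonicIdeal Y) := by
  classical
  intro x hx
  by_cases hex : ∃ ω, (toSet x ∩ Y ω).Infinite
  · obtain ⟨ω, hω⟩ := hex
    obtain ⟨z, hz, infinite_z, mass_lt_top⟩ := exists_infinite_subset_harmonicMass_lt_top hω
    refine ⟨fun n => decide (n ∈ z), fun η => ?_, ?_, ?_⟩ <;> rw [toSet_decide_mem]
    · obtain rfl | hne := eq_or_ne ω η
      · exact mass_lt_top
      · exact harmonicMass_lt_top_of_finite <| (hY ω η hne).subset <|
          inter_subset_inter_left _ (hz.trans inter_subset_right)
    · exact infinite_z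
    · exact hz.trans inter_subset_left
  · push Not at hex
    exact ⟨x, fun ω => harmonicMass_lt_top_of_finite (hex ω), hx, subset_rfl⟩

theorem analyticSet_compl_harmonicIdeal [MeasurableSpace Ω] [StandardBorelSpace Ω]
    {Y : Ω → Set ℕ} (hY : Measurable Y) : MeasureTheory.AnalyticSet (harmonicIdeal Y)ᶜ := by
  have compl_eq_image : (harmonicIdeal Y)ᶜ =
      Prod.fst '' {p : Cantor × Ω | harmonicMass (Y p.2) (toSet p.1) < ∞}ᶜ := by
    ext x
    simp [harmonicIdeal]
  rw [compl_eq_image]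
  refine MeasurableSet.analyticSet_image (MeasurableSet.compl ?_) measurable_fst
  exact measurableSet_lt
    (measurable_harmonicMass (measurable_toSet.comp measurable_fst) (hY.comp measurable_snd))
    measurable_const

end HarmonicIdeal

/-- For every front `B` on `ℕ` there is a tall coanalytic ideal `I` such that
`hom(F) ⊄ I` for every `F ⊆ B`. -/
theorem coanalytic_tall_ideal_avoiding_homs (B : Set (Finset ℕ))
    (hB : IsFrontOn B Set.univ) :
    ∃ I : Set Cantor, IsIdeal I ∧ Tall I ∧ MeasureTheory.AnalyticSet Iᶜ ∧
      ∀ F : Set (Finset ℕ), F ⊆ B →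
        ¬ ({y : Cantor | (toSet y).Infinite ∧ Homog F (toSet y)} ⊆ I) := by
  classical
  obtain ⟨Y, measurable_Y, infinite_Y, almostDisjoint_Y, homog_Y⟩ :=
    hB.exists_measurable_almostDisjoint_homog
  refine ⟨harmonicIdeal Y, isIdeal_harmonicIdeal Y, tall_harmonicIdeal almostDisjoint_Y,
    analyticSet_compl_harmonicIdeal measurable_Y, fun F hF hom_subset => ?_⟩
  obtain ⟨f, homog_f⟩ := homog_Y F hF
  let y : Cantor := fun n => decide (n ∈ Y f)
  have toSet_y : toSet y = Y f := toSet_decide_mem (Y f)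
  have infinite_y : (toSet y).Infinite := toSet_y ▸ infinite_Y f
  exact notMem_harmonicIdeal toSet_y infinite_y (hom_subset ⟨infinite_y, toSet_y.symm ▸ homog_f⟩)
end
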